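/- For all n ≥ 0, D_n^B(q, Z) = sum over k from 0 to n of (n choose k)_{q^2} * (-1)^k * q^{k(k-1)} * ((q^2;q^2)_{n-k} / (1 - q^2)^{n-k}) * (1 + qZ)^{n-k}, where D_n^B(q,Z) is the generating polynomial for signed derangements of order n by (fmaj, neg). -/

import Mathlib

open Finset

attribute [local instance] Classical.propDecidable

noncomputable section

/-- The word `x_1 x_2 ... x_n` (0-indexed) of a signed permutation of order `n`,
encoded as a pair (permutation, signs): `x_i = ±(σ(i)+1)`. -/
def sword (n : ℕ) (w : Equiv.Perm (Fin n) × (Fin n → Bool)) : ℕ → ℤ :=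
  fun i => if h : i < n then
      (if w.2 ⟨i, h⟩ then -(((w.1 ⟨i, h⟩ : ℕ) : ℤ) + 1) else (((w.1 ⟨i, h⟩ : ℕ) : ℤ) + 1))
    else 0

/-- number of negative letters -/
def negStat (n : ℕ) (x : ℕ → ℤ) : ℕ := ((Finset.range n).filter (fun i => x i < 0)).card

/-- number of positive fixed points (`x_i = i`, 1-indexed) -/
def fixPlus (n : ℕ) (x : ℕ → ℤ) : ℕ :=
  ((Finset.range n).filter (fun i => x i = (i : ℤ) + 1)).card

/-- number of negative fixed points (`x_i = -i`, 1-indexed) -/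
def fixMinus (n : ℕ) (x : ℕ → ℤ) : ℕ :=
  ((Finset.range n).filter (fun i => x i = -((i : ℤ) + 1))).card

/-- major index of the word -/
def majStat (n : ℕ) (x : ℕ → ℤ) : ℕ :=
  ∑ i ∈ Finset.range (n - 1), if x (i + 1) < x i then i + 1 else 0

/-- number of inversions of the word -/
def invStat (n : ℕ) (x : ℕ → ℤ) : ℕ :=
  ((Finset.range n ×ˢ Finset.range n).filter (fun p => p.1 < p.2 ∧ x p.2 < x p.1)).card

/-- length function `ℓ(w) = inv w + ∑_{x_i<0} |x_i|` -/
def lenStat (n : ℕ) (x : ℕ → ℤ) : ℕ :=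
  invStat n x + ∑ i ∈ Finset.range n, if x i < 0 then (x i).natAbs else 0

/-- flag-major index `fmaj = 2 maj + neg` -/
def fmajStat (n : ℕ) (x : ℕ → ℤ) : ℕ := 2 * majStat n x + negStat n x

/-- the word `x_0 ... x_{m-1}` has its leftmost trough at position `2k` (1-indexed):
`x_1 > x_2 > ... > x_{2k}` and `x_{2k} < x_{2k+1}` (with `x_{m+1} = ∞`). -/
def IsDesarAt (m k : ℕ) (x : ℕ → ℤ) : Prop :=
  1 ≤ k ∧ 2 * k ≤ m ∧ (∀ i, i + 1 < 2 * k → x (i + 1) < x i) ∧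
    (2 * k = m ∨ x (2 * k - 1) < x (2 * k))

/-- a word of length `m` is a desarrangement (empty word included) -/
def IsDesar (m : ℕ) (x : ℕ → ℤ) : Prop :=
  m = 0 ∨ ∃ k, IsDesarAt m k x

/-- the length of the longest right factor of the word of length `n`
which is a desarrangement -/
def dlen (n : ℕ) (x : ℕ → ℤ) : ℕ :=
  sSup {m | m ≤ n ∧ IsDesar m (fun i => x (n - m + i))}

/-- number of letters of `w^-` in the pixed factorization `w = w^- w^+ w^d` -/
def pixMinus (n : ℕ) (x : ℕ → ℤ) : ℕ :=
  ((Finset.range (n - dlen n x)).filter (fun i => x i < 0)).card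

/-- number of letters of `w^+` in the pixed factorization `w = w^- w^+ w^d` -/
def pixPlus (n : ℕ) (x : ℕ → ℤ) : ℕ :=
  ((Finset.range (n - dlen n x)).filter (fun i => 0 < x i)).card

/-- the number of derangements of an `m`-element set -/
def dnum (m : ℕ) : ℕ :=
  (Finset.univ.filter (fun σ : Equiv.Perm (Fin m) => ∀ i, σ i ≠ i)).card

/-- the word of an ordinary permutation of `{1, ..., m}` -/
def pword (m : ℕ) (σ : Equiv.Perm (Fin m)) : ℕ → ℤ :=
  fun i => if h : i < m then ((σ ⟨i, h⟩ : ℕ) : ℤ) + 1 else 0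

/-- the q-ascending factorial `(q;q)_m` -/
def qq {K : Type*} [CommRing K] (q : K) (m : ℕ) : K :=
  ∏ i ∈ Finset.range m, (1 - q ^ (i + 1))

/-- `D_m(q)`: generating polynomial for derangements of order `m` by major index -/
def Dmaj {K : Type*} [CommRing K] (q : K) (m : ℕ) : K :=
  ∑ σ ∈ Finset.univ.filter (fun σ : Equiv.Perm (Fin m) => ∀ i, σ i ≠ i),
    q ^ majStat m (pword m σ)

/-- `D_n^B(q,Z)`: generating polynomial for signed derangements of order `n`
(no positive fixed point) by `(fmaj, neg)`. -/
def DB {K : Type*} [CommRing K] (q Z : K) (n : ℕ) : K :=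
  ∑ w ∈ Finset.univ.filter
      (fun w : Equiv.Perm (Fin n) × (Fin n → Bool) => fixPlus n (sword n w) = 0),
    q ^ fmajStat n (sword n w) * Z ^ negStat n (sword n w)

/-!
Let `p = q ^ 2` and `y = q * Z`, so that `q ^ fmaj w * Z ^ neg w = p ^ maj w * y ^ neg w`.

Replace the positive fixed points of a signed permutation by `0` and shift every letter that is
neither a fixed point nor an excedance below `0`: no descent is created or destroyed. The result is
a shuffle of `k` zeros into the corresponding word of a signed derangement of order `n - k`, and
shuffling `k` copies of a letter absent from a word into it multiplies `p ^ maj` by the Gaussian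
binomial coefficient `(n choose k)_p` on summing over the positions. Hence `p ^ maj * y ^ neg` sums
over all signed permutations to `∑ k, (n choose k)_p * D (n - k)`. Inserting `±n` into a signed
permutation of order `n - 1`, the case `k = 1` of the shuffle formula, shows that the same sum is
`(1 + y) ^ n * [n]_p!`, and `q`-binomial inversion isolates `D n`.
-/

section QBinomial

variable {R : Type*} [CommSemiring R]

/-- The Gaussian binomial coefficient `(n choose k)_p`. Defining it by the `p`-Pascal rule rather
than as a quotient of `p`-factorials keeps it meaningful at roots of unity. -/
def qBinom (p : R) : ℕ → ℕ → R
  | _, 0 => 1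
  | 0, _ + 1 => 0
  | n + 1, k + 1 => qBinom p n k + p ^ (k + 1) * qBinom p n (k + 1)

/-- The `p`-factorial `[n]_p!`, equal to `(p;p)_n / (1 - p)^n` when the quotient makes sense. -/
def qFactorial (p : R) (n : ℕ) : R := ∏ i ∈ range n, ∑ j ∈ range (i + 1), p ^ j

@[simp]
theorem qBinom_zero_right (p : R) (n : ℕ) : qBinom p n 0 = 1 := by
  cases n <;> rfl

@[simp]
theorem qBinom_zero_succ (p : R) (k : ℕ) : qBinom p 0 (k + 1) = 0 := rfl

theorem qBinom_succ_succ (p : R) (n k : ℕ) :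
    qBinom p (n + 1) (k + 1) = qBinom p n k + p ^ (k + 1) * qBinom p n (k + 1) := rfl

theorem qBinom_eq_zero_of_lt (p : R) {n k : ℕ} (h : n < k) : qBinom p n k = 0 := by
  induction n generalizing k with
  | zero => obtain ⟨k, rfl⟩ := Nat.exists_eq_add_of_lt h; simp
  | succ n ih =>
    obtain ⟨k, rfl⟩ : ∃ j, k = j + 1 := ⟨k - 1, by omega⟩
    rw [qBinom_succ_succ, ih (by omega), ih (by omega), mul_zero, add_zero]

@[simp]
theorem qBinom_self (p : R) (n : ℕ) : qBinom p n n = 1 := by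
  induction n with
  | zero => rfl
  | succ n ih =>
    rw [qBinom_succ_succ, ih, qBinom_eq_zero_of_lt p n.lt_succ_self, mul_zero, add_zero]

theorem qBinom_one_right (p : R) (n : ℕ) : qBinom p n 1 = ∑ j ∈ range n, p ^ j := by
  induction n with
  | zero => rfl
  | succ n ih => rw [qBinom_succ_succ, ih, geom_sum_succ, qBinom_zero_right, zero_add, pow_one,
      add_comm]

theorem qBinom_succ_succ' (p : R) (m k : ℕ) :
    qBinom p (m + k + 1) (k + 1) = p ^ m * qBinom p (m + k) k + qBinom p (m + k) (k + 1) := by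
  induction k generalizing m with
  | zero => simp [qBinom_one_right, geom_sum_succ', add_comm]
  | succ k ihk =>
    induction m with
    | zero => simp [qBinom_eq_zero_of_lt p (k + 1).lt_succ_self]
    | succ m ihm =>
      have ihk' := ihk (m + 1)
      rw [show m + 1 + k = m + (k + 1) by ring] at ihk'
      rw [show m + 1 + (k + 1) = m + (k + 1) + 1 by ring]
      calc qBinom p (m + (k + 1) + 1 + 1) (k + 1 + 1)
        _ = p ^ (m + 1) * qBinom p (m + (k + 1)) k + qBinom p (m + (k + 1)) (k + 1) +
            p ^ (k + 2) * (p ^ m * qBinom p (m + (k + 1)) (k + 1) +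
              qBinom p (m + (k + 1)) (k + 2)) := by
          rw [qBinom_succ_succ, ihk', ihm]
        _ = p ^ (m + 1) * (qBinom p (m + (k + 1)) k +
              p ^ (k + 1) * qBinom p (m + (k + 1)) (k + 1)) +
            (qBinom p (m + (k + 1)) (k + 1) +
              p ^ (k + 2) * qBinom p (m + (k + 1)) (k + 2)) := by ring
        _ = _ := by rw [← qBinom_succ_succ, ← qBinom_succ_succ]

theorem qBinom_mul_qBinom (p : R) (s t u : ℕ) :
    qBinom p (s + t + u) (s + t) * qBinom p (s + t) s =
      qBinom p (s + t + u) s * qBinom p (t + u) t := by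
  induction s generalizing t u with
  | zero => simp
  | succ s ihs =>
    induction t generalizing u with
    | zero => simp
    | succ t iht =>
      induction u with
      | zero => simp
      | succ u ihu =>
        have hs := ihs (t + 1) (u + 1)
        have ht := iht (u + 1)
        simp only [← add_assoc, add_right_comm _ 1] at hs ht ihu ⊢
        generalize s + t + u + 1 + 1 = n at *
        calc qBinom p (n + 1) (s + t + 1 + 1) * qBinom p (s + t + 1 + 1) (s + 1)
          _ = qBinom p n (s + t + 1) * qBinom p (s + t + 1) s +
              p ^ (s + 1) * (qBinom p n (s + t + 1) * qBinom p (s + t + 1) (s + 1)) +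
              p ^ (s + t + 2) *
                (qBinom p n (s + t + 1 + 1) * qBinom p (s + t + 1 + 1) (s + 1)) := by
            rw [qBinom_succ_succ p n, add_mul]
            nth_rw 1 [qBinom_succ_succ p (s + t + 1)]
            ring
          _ = (qBinom p n s + p ^ (s + 1) * qBinom p n (s + 1)) *
                qBinom p (t + u + 1 + 1) (t + 1) := by
            rw [hs, ht, ihu, add_mul, add_assoc]
            nth_rw 3 [qBinom_succ_succ p (t + u + 1)]
            ring
          _ = _ := by rw [← qBinom_succ_succ]

theorem prod_one_add_pow_mul (p x : R) (n : ℕ) :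
    ∏ i ∈ range n, (1 + p ^ i * x) =
      ∑ k ∈ range (n + 1), p ^ k.choose 2 * qBinom p n k * x ^ k := by
  induction n generalizing x with
  | zero => simp
  | succ n ih =>
    have hterm (k : ℕ) : p ^ (k + 1).choose 2 * qBinom p (n + 1) (k + 1) * x ^ (k + 1) =
        p ^ k.choose 2 * qBinom p n k * (p * x) ^ k * x +
          p ^ (k + 1).choose 2 * qBinom p n (k + 1) * (p * x) ^ (k + 1) := by
      rw [qBinom_succ_succ, Nat.choose_succ_succ', Nat.choose_one_right]
      ring
    calc ∏ i ∈ range (n + 1), (1 + p ^ i * x)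
      _ = (∏ i ∈ range n, (1 + p ^ i * (p * x))) * (1 + x) := by
        simp only [prod_range_succ', pow_succ, pow_zero, one_mul, mul_assoc]
      _ = ∑ k ∈ range (n + 1), p ^ k.choose 2 * qBinom p n k * (p * x) ^ k * x +
          ∑ k ∈ range (n + 2), p ^ k.choose 2 * qBinom p n k * (p * x) ^ k := by
        rw [ih, sum_range_succ _ (n + 1), qBinom_eq_zero_of_lt p n.lt_succ_self, ← sum_mul]
        ring
      _ = ∑ k ∈ range (n + 2), p ^ k.choose 2 * qBinom p (n + 1) k * x ^ k := by
        rw [sum_range_succ' _ (n + 1), sum_range_succ' _ (n + 1)]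
        simp only [hterm, sum_add_distrib, add_assoc, qBinom_zero_right, pow_zero]

end QBinomial

section QInversion

variable {R : Type*} [CommRing R]

theorem sum_neg_one_pow_mul_qBinom (p : R) {n : ℕ} (hn : n ≠ 0) :
    ∑ k ∈ range (n + 1), (-1) ^ k * p ^ k.choose 2 * qBinom p n k = 0 := by
  calc ∑ k ∈ range (n + 1), (-1) ^ k * p ^ k.choose 2 * qBinom p n k
    _ = ∏ i ∈ range n, (1 + p ^ i * (-1)) := by
      rw [prod_one_add_pow_mul]
      exact sum_congr rfl fun k _ => by ring
    _ = 0 := prod_eq_zero (mem_range.2 (Nat.pos_of_ne_zero hn)) (by simp)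

theorem qBinom_inversion (p : R) {a b : ℕ → R}
    (h : ∀ n, b n = ∑ k ∈ range (n + 1), qBinom p n k * a (n - k)) (n : ℕ) :
    a n = ∑ k ∈ range (n + 1), (-1) ^ k * p ^ k.choose 2 * qBinom p n k * b (n - k) := by
  have hrev : ∀ j ∈ range (n + 1), ∀ k ∈ range (j + 1),
      (-1) ^ k * p ^ k.choose 2 * qBinom p n k * (qBinom p (n - k) (j - k) * a (n - k - (j - k))) =
        qBinom p n j * a (n - j) * ((-1) ^ k * p ^ k.choose 2 * qBinom p j k) := by
    intro j hj k hk
    obtain ⟨t, rfl⟩ := Nat.exists_eq_add_of_le (Nat.lt_succ_iff.1 (mem_range.1 hk))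
    obtain ⟨u, rfl⟩ := Nat.exists_eq_add_of_le (Nat.lt_succ_iff.1 (mem_range.1 hj))
    have := qBinom_mul_qBinom p k t u
    simp only [add_assoc, Nat.add_sub_add_left, Nat.add_sub_cancel_left] at this ⊢
    linear_combination (-(-1) ^ k * p ^ k.choose 2 * a u) * this
  symm
  calc ∑ k ∈ range (n + 1), (-1) ^ k * p ^ k.choose 2 * qBinom p n k * b (n - k)
    _ = ∑ k ∈ range (n + 1), ∑ l ∈ range (n + 1 - k), (-1) ^ k * p ^ k.choose 2 * qBinom p n k *
          (qBinom p (n - k) l * a (n - k - l)) := by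
      refine sum_congr rfl fun k hk => ?_
      rw [h, mul_sum, Nat.succ_sub (Nat.lt_succ_iff.1 (mem_range.1 hk))]
    _ = ∑ j ∈ range (n + 1), qBinom p n j * a (n - j) *
          ∑ k ∈ range (j + 1), (-1) ^ k * p ^ k.choose 2 * qBinom p j k := by
      rw [← sum_range_diag_flip (n + 1) fun k l => (-1) ^ k * p ^ k.choose 2 * qBinom p n k *
        (qBinom p (n - k) l * a (n - k - l))]
      exact sum_congr rfl fun j hj => by rw [mul_sum, sum_congr rfl (hrev j hj)]
    _ = a n := by
      rw [sum_eq_single_of_mem 0 (by simp) fun j _ hj => by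
        rw [sum_neg_one_pow_mul_qBinom p hj, mul_zero]]
      simp

theorem qq_succ (p : R) (n : ℕ) : qq p (n + 1) = qq p n * (1 - p ^ (n + 1)) :=
  prod_range_succ _ _

theorem qBinom_mul_qq_mul_qq (p : R) (m k : ℕ) :
    qBinom p (m + k) k * (qq p m * qq p k) = qq p (m + k) := by
  induction k generalizing m with
  | zero => simp [qq]
  | succ k ihk =>
    induction m with
    | zero => simp [qq]
    | succ m ihm =>
      have ihk' := ihk (m + 1)
      rw [show m + 1 + k = m + (k + 1) by ring] at ihk'
      rw [show m + 1 + (k + 1) = m + (k + 1) + 1 by ring, qBinom_succ_succ, qq_succ p (m + (k + 1))]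
      rw [qq_succ] at ihk' ihm ⊢
      rw [qq_succ]
      linear_combination (1 - p ^ (k + 1)) * ihk' + p ^ (k + 1) * (1 - p ^ (m + 1)) * ihm

theorem one_sub_pow_mul_qFactorial (p : R) (n : ℕ) : (1 - p) ^ n * qFactorial p n = qq p n := by
  simp only [qFactorial, qq, ← mul_neg_geom_sum, prod_mul_distrib, prod_const, card_range]

end QInversion

section Field

variable {K : Type*} [Field K] {p : K}

theorem qBinom_eq_qq_div {n k : ℕ} (hk : k ≤ n) (h : ∀ m ≤ n, qq p m ≠ 0) :
    qBinom p n k = qq p n / (qq p k * qq p (n - k)) := by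
  have hne : qq p k * qq p (n - k) ≠ 0 := mul_ne_zero (h k hk) (h _ (n.sub_le k))
  rw [eq_div_iff hne, mul_comm (qq p k)]
  simpa only [Nat.sub_add_cancel hk] using qBinom_mul_qq_mul_qq p (n - k) k

theorem qFactorial_eq_qq_div (h : 1 - p ≠ 0) (n : ℕ) :
    qFactorial p n = qq p n / (1 - p) ^ n := by
  rw [eq_div_iff (pow_ne_zero n h), mul_comm, one_sub_pow_mul_qFactorial]

end Field

section MajorIndex

theorem majStat_congr {n : ℕ} {x y : ℕ → ℤ}
    (h : ∀ i, i + 1 < n → (x (i + 1) < x i ↔ y (i + 1) < y i)) : majStat n x = majStat n y :=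
  sum_congr rfl fun i hi => by
    have := mem_range.1 hi
    simp only [h i (by omega)]

theorem majStat_congr_of_eq {n : ℕ} {x y : ℕ → ℤ} (h : ∀ i < n, x i = y i) :
    majStat n x = majStat n y :=
  majStat_congr fun i hi => by rw [h (i + 1) hi, h i (by omega)]

theorem majStat_add_two (n : ℕ) (x : ℕ → ℤ) :
    majStat (n + 2) x = majStat (n + 1) x + if x (n + 1) < x n then n + 1 else 0 :=
  sum_range_succ _ _

theorem majStat_succ_of_le {n : ℕ} {x : ℕ → ℤ} (h : ∀ i, i + 1 = n → x i ≤ x n) :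
    majStat (n + 1) x = majStat n x := by
  cases n with
  | zero => rfl
  | succ n => rw [majStat_add_two, if_neg (h n rfl).not_gt, add_zero]

end MajorIndex

section Complement

/-- The `j`-th smallest element of the complement of `F` in `ℕ`, counting from `0`. -/
def complNth (F : Finset ℕ) (j : ℕ) : ℕ := Nat.nth (fun i => i ∉ F) j

/-- The number of elements of the complement of `F` below `i`; it inverts `complNth F`. -/
def complCount (F : Finset ℕ) (i : ℕ) : ℕ := Nat.count (fun i => i ∉ F) i

variable {F : Finset ℕ} {i j k m n : ℕ}

theorem complNth_strictMono (F : Finset ℕ) : StrictMono (complNth F) :=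
  Nat.nth_strictMono F.finite_toSet.infinite_compl

theorem complNth_notMem (F : Finset ℕ) (j : ℕ) : complNth F j ∉ F :=
  Nat.nth_mem_of_infinite F.finite_toSet.infinite_compl j

theorem complCount_complNth (F : Finset ℕ) (j : ℕ) : complCount F (complNth F j) = j :=
  Nat.count_nth_of_infinite F.finite_toSet.infinite_compl j

theorem complNth_complCount (h : i ∉ F) : complNth F (complCount F i) = i :=
  Nat.nth_count (p := fun i => i ∉ F) h

theorem complCount_succ_of_notMem (h : i ∉ F) : complCount F (i + 1) = complCount F i + 1 := by
  rw [complCount, Nat.count_succ, if_pos h, complCount]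

theorem complCount_of_mem_powersetCard (hF : F ∈ powersetCard k (range (m + k))) :
    complCount F (m + k) = m := by
  obtain ⟨hsub, hcard⟩ := mem_powersetCard.1 hF
  rw [complCount, Nat.count_eq_card_filter_range, filter_notMem_eq_sdiff,
    card_sdiff_of_subset hsub, card_range, hcard, Nat.add_sub_cancel]

theorem complCount_lt (hF : F ∈ powersetCard k (range (m + k))) (h : i ∉ F) (hi : i < m + k) :
    complCount F i < m :=
  (Nat.count_strict_mono (p := fun i => i ∉ F) h hi).trans_eq (complCount_of_mem_powersetCard hF)

theorem exists_complNth_eq (hF : F ∈ powersetCard k (range (m + k))) (hi : i < m + k)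
    (hiF : i ∉ F) : ∃ j : Fin m, complNth F j = i :=
  ⟨⟨complCount F i, complCount_lt hF hiF hi⟩, complNth_complCount hiF⟩

theorem complNth_lt (hF : F ∈ powersetCard k (range (m + k))) (hj : j < m) :
    complNth F j < m + k :=
  Nat.nth_lt_of_lt_count (hj.trans_eq (complCount_of_mem_powersetCard hF).symm)

theorem lt_of_mem_of_mem_powersetCard_range (hF : F ∈ powersetCard k (range n))
    (hi : i ∈ F) : i < n :=
  mem_range.1 ((mem_powersetCard.1 hF).1 hi)

theorem complCount_singleton (i j : ℕ) :
    complCount {i} j = if j ≤ i then j else j - 1 := by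
  induction j with
  | zero => simp [complCount]
  | succ j ih =>
    rw [complCount, Nat.count_succ, ← complCount, ih]
    simp only [mem_singleton]
    split_ifs <;> omega

theorem complCount_insert (hi : i ≤ n) : complCount (insert n F) i = complCount F i := by
  rw [complCount, complCount, Nat.count_eq_card_filter_range, Nat.count_eq_card_filter_range]
  refine congrArg card (filter_congr fun j hj => ?_)
  rw [mem_insert, not_or, and_iff_right ((mem_range.1 hj).trans_le hi).ne]

theorem insert_mem_powersetCard_range (hF : F ∈ powersetCard k (range (m + k))) :
    insert (m + k) F ∈ powersetCard (k + 1) (range (m + (k + 1))) := by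
  obtain ⟨hsub, hcard⟩ := mem_powersetCard.1 hF
  have hmem : m + k ∉ F := fun h => notMem_range_self (hsub h)
  rw [← add_assoc, range_add_one, mem_powersetCard, card_insert_of_notMem hmem, hcard]
  exact ⟨insert_subset_insert _ hsub, rfl⟩

theorem sum_powersetCard_range_succ {M : Type*} [AddCommMonoid M] (f : Finset ℕ → M) (n k : ℕ) :
    ∑ F ∈ powersetCard (k + 1) (range (n + 1)), f F =
      ∑ F ∈ powersetCard (k + 1) (range n), f F +
        ∑ F ∈ powersetCard k (range n), f (insert n F) := by
  have hn {j : ℕ} : ∀ F ∈ powersetCard j (range n), n ∉ F := fun F hF h =>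
    (lt_of_mem_of_mem_powersetCard_range hF h).false
  rw [range_add_one, powersetCard_succ_insert notMem_range_self, sum_union, sum_image]
  · intro F hF G hG h
    rw [← erase_insert (hn F hF), h, erase_insert (hn G hG)]
  · refine disjoint_left.2 fun F hF hF' => ?_
    obtain ⟨G, -, rfl⟩ := mem_image.1 hF'
    exact hn _ hF (mem_insert_self _ _)

end Complement

section Shuffle

/-- The shuffle of the word `v` with copies of the letter `c` in which the positions of the copies
form the set `F`. -/
def insertLetter (c : ℤ) (v : ℕ → ℤ) (F : Finset ℕ) (i : ℕ) : ℤ :=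
  if i ∈ F then c else v (complCount F i)

variable {c : ℤ} {v : ℕ → ℤ} {F : Finset ℕ} {i k m : ℕ}

theorem insertLetter_of_mem (h : i ∈ F) : insertLetter c v F i = c := if_pos h

theorem insertLetter_of_notMem (h : i ∉ F) : insertLetter c v F i = v (complCount F i) := if_neg h

theorem insertLetter_complNth (c : ℤ) (v : ℕ → ℤ) (j : ℕ) :
    insertLetter c v F (complNth F j) = v j := by
  rw [insertLetter_of_notMem (complNth_notMem F j), complCount_complNth]

theorem insertLetter_empty (c : ℤ) (v : ℕ → ℤ) : insertLetter c v ∅ = v := by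
  ext i
  simp [insertLetter, complCount, Nat.count_true]

theorem insertLetter_apply_add (hF : F ∈ powersetCard k (range (m + k))) :
    insertLetter c v F (m + k) = v m := by
  rw [insertLetter_of_notMem fun h => (lt_of_mem_of_mem_powersetCard_range hF h).false,
    complCount_of_mem_powersetCard hF]

theorem insertLetter_congr {w : ℕ → ℤ} (hF : F ∈ powersetCard k (range (m + k)))
    (h : ∀ j < m, v j = w j) (hi : i < m + k) : insertLetter c v F i = insertLetter c w F i := by
  by_cases hiF : i ∈ F
  · rw [insertLetter_of_mem hiF, insertLetter_of_mem hiF]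
  · rw [insertLetter_of_notMem hiF, insertLetter_of_notMem hiF, h _ (complCount_lt hF hiF hi)]

theorem insertLetter_insert (hF : F ∈ powersetCard k (range (m + k))) (hi : i ≤ m + k) :
    insertLetter c v (insert (m + k) F) i = insertLetter c (Function.update v m c) F i := by
  obtain rfl | hi := hi.eq_or_lt
  · rw [insertLetter_of_mem (mem_insert_self _ _), insertLetter_apply_add hF, Function.update_self]
  · rw [← insertLetter_congr (v := v) hF
      (fun j hj => (Function.update_of_ne hj.ne c v).symm) hi]
    simp only [insertLetter, complCount_insert hi.le, mem_insert, or_iff_right hi.ne]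

theorem majStat_insertLetter_add_two (hF : F ∈ powersetCard k (range (m + k))) :
    majStat (m + k + 2) (insertLetter c v F) =
      majStat (m + k + 1) (insertLetter c v F) + if v (m + 1) < v m then m + k + 1 else 0 := by
  have hF' : F ∈ powersetCard k (range (m + 1 + k)) :=
    powersetCard_mono (range_subset_range.2 (by omega)) hF
  rw [majStat_add_two, insertLetter_apply_add hF, add_right_comm, insertLetter_apply_add hF']

theorem majStat_insertLetter_insert (hF : F ∈ powersetCard k (range (m + k))) :
    majStat (m + (k + 1) + 1) (insertLetter c v (insert (m + k) F)) =
      majStat (m + k + 1) (insertLetter c (Function.update v m c) F) +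
        if v m < c then m + k + 1 else 0 := by
  rw [← add_assoc, majStat_add_two, add_assoc,
    insertLetter_apply_add (insert_mem_powersetCard_range hF),
    insertLetter_of_mem (mem_insert_self _ _)]
  congr 1
  exact majStat_congr_of_eq fun i hi => insertLetter_insert hF (Nat.lt_succ_iff.1 hi)

variable {R : Type*} [CommSemiring R]

theorem sum_pow_majStat_insertLetter_insert (p : R) (c : ℤ) (v : ℕ → ℤ) (m k : ℕ) :
    ∑ F ∈ powersetCard k (range (m + k)),
        p ^ majStat (m + (k + 1) + 1) (insertLetter c v (insert (m + k) F)) =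
      (∑ F ∈ powersetCard k (range (m + k)),
        p ^ majStat (m + k + 1) (insertLetter c (Function.update v m c) F)) *
          p ^ if v m < c then m + k + 1 else 0 := by
  rw [sum_mul]
  exact sum_congr rfl fun F hF => by rw [← pow_add, ← majStat_insertLetter_insert hF]

theorem sum_pow_majStat_insertLetter_rec (p : R) (c : ℤ) (v : ℕ → ℤ) (m k : ℕ) :
    ∑ F ∈ powersetCard (k + 1) (range (m + 1 + (k + 1))),
        p ^ majStat (m + 1 + (k + 1) + 1) (insertLetter c v F) =
      (∑ F ∈ powersetCard (k + 1) (range (m + (k + 1))),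
        p ^ majStat (m + (k + 1) + 1) (insertLetter c v F)) *
          p ^ (if v (m + 1) < v m then m + (k + 1) + 1 else 0) +
      (∑ F ∈ powersetCard k (range (m + 1 + k)),
        p ^ majStat (m + 1 + k + 1) (insertLetter c (Function.update v (m + 1) c) F)) *
          p ^ if v (m + 1) < c then m + 1 + k + 1 else 0 := by
  rw [← sum_pow_majStat_insertLetter_insert, ← add_assoc, sum_powersetCard_range_succ,
    show m + 1 + k = m + (k + 1) by ring, sum_mul]
  congr 1
  exact sum_congr rfl fun F hF => by rw [← pow_add, ← majStat_insertLetter_add_two hF]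

/- Excluding the last letter `v m` from the shuffle makes the induction close up: a copy of `c` just
before `v m` amounts to the same statement for the word with `v m` replaced by `c`. -/
theorem sum_pow_majStat_insertLetter_succ (p : R) (hv : ∀ i < m, v i ≠ c) :
    ∑ F ∈ powersetCard k (range (m + k)), p ^ majStat (m + k + 1) (insertLetter c v F) =
      p ^ (majStat (m + 1) v + if v m < c then k else 0) * qBinom p (m + k) k := by
  induction k generalizing m v with
  | zero => simp [insertLetter_empty]
  | succ k ihk =>
    have hupdate {m : ℕ} {v : ℕ → ℤ} (hv : ∀ i < m, v i ≠ c) :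
        ∀ i < m, Function.update v m c i ≠ c :=
      fun i hi => (Function.update_of_ne hi.ne c v).trans_ne (hv i hi)
    have hmaj (m v) : majStat m (Function.update v m c) = majStat m v :=
      majStat_congr_of_eq fun i hi => Function.update_of_ne hi.ne c v
    induction m with
    | zero =>
      rw [← add_assoc, sum_powersetCard_range_succ, powersetCard_eq_empty.2 (by simp), sum_empty,
        zero_add, add_assoc 0, sum_pow_majStat_insertLetter_insert, ihk (hupdate hv)]
      simp [majStat]
    | succ m ihm =>
      rw [sum_pow_majStat_insertLetter_rec, ihk (hupdate hv),
        ihm fun i hi => hv i (hi.trans m.lt_succ_self), majStat_add_two, majStat_add_two, hmaj,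
        Function.update_self, Function.update_of_ne m.lt_succ_self.ne, if_neg (lt_irrefl c)]
      have hne : v m ≠ c := hv m m.lt_succ_self
      have hpascal := qBinom_succ_succ p (m + 1 + k) k
      have hpascal' := qBinom_succ_succ' p (m + 1) k
      rw [← add_assoc, ← add_assoc, add_right_comm m k 1]
      -- The first Pascal rule is needed when `v m`, `c`, `v (m + 1)` are cyclically increasing.
      split_ifs <;> first
        | omega
        | rw [hpascal]; ring1
        | rw [hpascal']; ring1

theorem sum_pow_majStat_insertLetter (p : R) (hv : ∀ i < m, v i ≠ c) :
    ∑ F ∈ powersetCard k (range (m + k)), p ^ majStat (m + k) (insertLetter c v F) =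
      p ^ majStat m v * qBinom p (m + k) k := by
  let v' := Function.update v m (max c (v (m - 1)))
  have hv' : ∀ i < m, v' i = v i := fun i hi => Function.update_of_ne hi.ne _ v
  have hlast : v' m = max c (v (m - 1)) := Function.update_self ..
  have hmaj : majStat (m + 1) v' = majStat m v := by
    rw [majStat_succ_of_le, majStat_congr_of_eq hv']
    rintro i rfl
    rw [hv' i i.lt_succ_self, hlast]
    exact le_max_right ..
  have hshuffle : ∀ F ∈ powersetCard k (range (m + k)),
      majStat (m + k + 1) (insertLetter c v' F) = majStat (m + k) (insertLetter c v F) := by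
    intro F hF
    rw [majStat_succ_of_le,
      majStat_congr_of_eq fun i hi => insertLetter_congr (w := v) hF hv' hi]
    intro i hi
    rw [insertLetter_apply_add hF, hlast]
    by_cases hiF : i ∈ F
    · rw [insertLetter_of_mem hiF]
      exact le_max_left ..
    · have hcount : complCount F i + 1 = m := by
        rw [← complCount_succ_of_notMem hiF, hi, complCount_of_mem_powersetCard hF]
      rw [insertLetter_of_notMem hiF, hv' _ (by omega), ← hcount]
      exact le_max_right ..
  have hsum := sum_pow_majStat_insertLetter_succ (k := k) p
    fun i hi => (hv' i hi).trans_ne (hv i hi)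
  rwa [sum_congr rfl fun F hF => by rw [hshuffle F hF], hmaj, hlast,
    if_neg (le_max_left ..).not_gt, add_zero] at hsum

end Shuffle

section SignedPermutation

/-- A signed permutation of order `n`, encoded as in `sword`: the underlying permutation together
with the indicator function of the positions of the negative letters. -/
abbrev SignedPerm (n : ℕ) : Type := Equiv.Perm (Fin n) × (Fin n → Bool)

/-- The letter `j + 1`, or `-(j + 1)` if `b` is `true`; the shift matches the `0`-indexing of
`sword`. -/
def signedLetter (b : Bool) (j : ℕ) : ℤ := if b then -((j : ℤ) + 1) else (j : ℤ) + 1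

variable {b b' : Bool} {i j n : ℕ}

theorem signedLetter_false (j : ℕ) : signedLetter false j = (j : ℤ) + 1 := rfl

theorem signedLetter_le (h : j < n) : signedLetter b j ≤ n := by
  unfold signedLetter
  split_ifs <;> omega

theorem signedLetter_neg_iff : signedLetter b j < 0 ↔ b = true := by
  grind [signedLetter]

theorem signedLetter_lt_signedLetter_iff {f : ℕ → ℕ} (hf : StrictMono f) :
    signedLetter b (f i) < signedLetter b' (f j) ↔ signedLetter b i < signedLetter b' j := by
  have hij : f i < f j ↔ i < j := hf.lt_iff_lt
  have hji : f j < f i ↔ j < i := hf.lt_iff_lt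
  unfold signedLetter
  split_ifs <;> omega

theorem signedLetter_inj : signedLetter b i = signedLetter b' j ↔ b = b' ∧ i = j := by
  grind [signedLetter]

theorem sword_apply (w : SignedPerm n) (i : Fin n) :
    sword n w i = signedLetter (w.2 i) (w.1 i) :=
  dif_pos i.isLt

theorem sword_le (w : SignedPerm n) (i : ℕ) : sword n w i ≤ n := by
  by_cases hi : i < n
  · exact (sword_apply w ⟨i, hi⟩).trans_le (signedLetter_le (Fin.isLt _))
  · simp [sword, hi]

theorem sword_ne (w : SignedPerm n) (hi : i < n) (hj : j < n) (hij : i ≠ j) :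
    sword n w i ≠ sword n w j := by
  have hi' := sword_apply w ⟨i, hi⟩
  have hj' := sword_apply w ⟨j, hj⟩
  simp only [hi', hj', ne_eq, signedLetter_inj, Fin.val_inj, w.1.apply_eq_iff_eq, Fin.mk.injEq, hij,
    and_false, not_false_eq_true]

theorem negStat_sword (w : SignedPerm n) :
    negStat n (sword n w) = ∑ i : Fin n, (w.2 i).toNat := by
  rw [negStat, card_filter, sum_range]
  refine sum_congr rfl fun i _ => ?_
  simp only [sword_apply, signedLetter_neg_iff]
  cases w.2 i <;> rfl

/-- The weight `p ^ maj w * y ^ neg w` of a signed permutation; for `p = q ^ 2` and `y = q * Z` it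
is `q ^ fmaj w * Z ^ neg w`. -/
def majNegWeight {R : Type*} [CommSemiring R] (p y : R) (w : SignedPerm n) : R :=
  p ^ majStat n (sword n w) * y ^ negStat n (sword n w)

end SignedPermutation

section InsertTop

variable {n : ℕ}

/-- The signed permutation of order `n + 1` obtained from `a.2.2` by inserting the letter `n + 1`,
negated if `a.2.1` is `true`, at position `a.1`. -/
def insertTop (a : Fin (n + 1) × Bool × SignedPerm n) : SignedPerm (n + 1) :=
  ((finSuccEquiv' a.1).trans
      ((Equiv.optionCongr a.2.2.1).trans (finSuccEquiv' (Fin.last n)).symm),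
    Fin.insertNth a.1 a.2.1 a.2.2.2)

theorem insertTop_fst_self (a : Fin (n + 1) × Bool × SignedPerm n) :
    (insertTop a).1 a.1 = Fin.last n := by
  simp [insertTop]

theorem insertTop_fst_succAbove (a : Fin (n + 1) × Bool × SignedPerm n) (j : Fin n) :
    (insertTop a).1 (a.1.succAbove j) = (a.2.2.1 j).castSucc := by
  simp [insertTop]

theorem insertTop_bijective : Function.Bijective (insertTop (n := n)) := by
  rw [Fintype.bijective_iff_injective_and_card]
  refine ⟨?_, ?_⟩
  · rintro ⟨i, b, σ, s⟩ ⟨i', b', σ', s'⟩ h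
    obtain rfl : i = i' := (insertTop (i, b, σ, s)).1.injective <|
      (insertTop_fst_self _).trans (h ▸ (insertTop_fst_self (i', b', σ', s')).symm)
    have hsign : Fin.insertNth (α := fun _ => Bool) i b s = Fin.insertNth i b' s' :=
      congrArg Prod.snd h
    obtain ⟨rfl, rfl⟩ := Fin.insertNth_inj.1 hsign
    have hσ : σ = σ' := Equiv.ext fun j => Fin.castSucc_injective n <|
      (insertTop_fst_succAbove (i, b, σ, s) j).symm.trans
        (h ▸ insertTop_fst_succAbove (i, b, σ', s) j)
    rw [hσ]
  · simp only [Fintype.card_prod, Fintype.card_fin, Fintype.card_bool, Fintype.card_perm,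
      Fintype.card_fun, Nat.factorial_succ, pow_succ]
    ring

theorem sword_insertTop (i : Fin (n + 1)) (b : Bool) (w : SignedPerm n) (l : Fin (n + 1)) :
    sword (n + 1) (insertTop (i, b, w)) l =
      insertLetter (signedLetter b n) (sword n w) {(i : ℕ)} l := by
  rw [sword_apply]
  obtain rfl | ⟨j, rfl⟩ := Fin.eq_self_or_eq_succAbove i l
  · rw [insertTop_fst_self (l, b, w), insertLetter_of_mem (mem_singleton_self _)]
    simp [insertTop]
  · have hne : (i.succAbove j : ℕ) ∉ ({(i : ℕ)} : Finset ℕ) := by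
      simp [Fin.val_inj, Fin.succAbove_ne]
    have hcount : complCount {(i : ℕ)} (i.succAbove j) = j := by
      rw [complCount_singleton]
      simp only [Fin.succAbove, Fin.lt_def]
      split_ifs <;> simp_all <;> omega
    rw [insertTop_fst_succAbove (i, b, w), insertLetter_of_notMem hne, hcount, sword_apply]
    simp [insertTop]

theorem negStat_insertTop (i : Fin (n + 1)) (b : Bool) (w : SignedPerm n) :
    negStat (n + 1) (sword (n + 1) (insertTop (i, b, w))) =
      b.toNat + negStat n (sword n w) := by
  rw [negStat_sword, negStat_sword, Fin.sum_univ_succAbove _ i]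
  simp [insertTop]

variable {R : Type*} [CommSemiring R]

theorem sum_pow_majStat_insertLetter_singleton (p : R) {c : ℤ} {v : ℕ → ℤ}
    (hv : ∀ i < n, v i ≠ c) :
    ∑ i : Fin (n + 1), p ^ majStat (n + 1) (insertLetter c v {(i : ℕ)}) =
      p ^ majStat n v * ∑ j ∈ range (n + 1), p ^ j := by
  rw [← qBinom_one_right, ← sum_pow_majStat_insertLetter p hv, powersetCard_one, sum_map, sum_range]
  rfl

theorem sum_majNegWeight_succ (p y : R) (n : ℕ) :
    ∑ w : SignedPerm (n + 1), majNegWeight p y w =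
      (1 + y) * (∑ j ∈ range (n + 1), p ^ j) * ∑ w : SignedPerm n, majNegWeight p y w := by
  have hweight (i : Fin (n + 1)) (b : Bool) (w : SignedPerm n) :
      majNegWeight p y (insertTop (i, b, w)) =
        p ^ majStat (n + 1) (insertLetter (signedLetter b n) (sword n w) {(i : ℕ)}) *
          (y ^ b.toNat * y ^ negStat n (sword n w)) := by
    rw [majNegWeight, negStat_insertTop, pow_add,
      majStat_congr_of_eq fun l hl => sword_insertTop i b w ⟨l, hl⟩]
  have hfresh (b : Bool) (w : SignedPerm n) : ∀ i < n, sword n w i ≠ signedLetter b n := by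
    intro i hi
    rw [sword_apply w ⟨i, hi⟩]
    exact fun h => (Fin.isLt _).ne (signedLetter_inj.1 h).2
  rw [← insertTop_bijective.sum_comp, Fintype.sum_prod_type_right, Fintype.sum_prod_type_right,
    mul_sum]
  refine sum_congr rfl fun w _ => ?_
  simp only [hweight, ← sum_mul, sum_pow_majStat_insertLetter_singleton p (hfresh _ w)]
  rw [Fintype.sum_bool, majNegWeight, Bool.toNat_true, Bool.toNat_false]
  ring

theorem sum_majNegWeight (p y : R) (n : ℕ) :
    ∑ w : SignedPerm n, majNegWeight p y w = (1 + y) ^ n * qFactorial p n := by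
  induction n with
  | zero => simp [majNegWeight, qFactorial, majStat, negStat]
  | succ n ih =>
    rw [sum_majNegWeight_succ, ih, qFactorial, qFactorial, prod_range_succ]
    ring

end InsertTop

section FixedPoints

variable {F : Finset ℕ} {i k m n : ℕ}

/-- The set of positive fixed points of a word, as `0`-indexed positions. -/
def fixedSet (n : ℕ) (x : ℕ → ℤ) : Finset ℕ := {i ∈ range n | x i = (i : ℤ) + 1}

theorem fixedSet_eq_empty_iff {x : ℕ → ℤ} : fixedSet n x = ∅ ↔ fixPlus n x = 0 :=
  card_eq_zero.symm

/-- The order isomorphism between `Fin m` and the complement of `F` in `Fin (m + k)`. -/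
def complEquiv (hF : F ∈ powersetCard k (range (m + k))) :
    Fin m ≃ {i : Fin (m + k) // (i : ℕ) ∉ F} where
  toFun j := ⟨⟨complNth F j, complNth_lt hF j.isLt⟩, complNth_notMem F j⟩
  invFun i := ⟨complCount F i, complCount_lt hF i.2 i.1.isLt⟩
  left_inv j := Fin.ext (complCount_complNth F j)
  right_inv i := Subtype.ext (Fin.ext (complNth_complCount i.2))

theorem coe_complEquiv (hF : F ∈ powersetCard k (range (m + k))) (j : Fin m) :
    ((complEquiv hF j : Fin (m + k)) : ℕ) = complNth F j := rfl

/-- The signed permutation of order `m + k` having every element of `F` as a positive fixed point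
and inducing `v` on the complement of `F`. -/
def extendFixed (hF : F ∈ powersetCard k (range (m + k))) (v : SignedPerm m) :
    SignedPerm (m + k) :=
  (v.1.extendDomain (complEquiv hF),
    fun i => if h : (i : ℕ) ∉ F then v.2 ((complEquiv hF).symm ⟨i, h⟩) else false)

variable (hF : F ∈ powersetCard k (range (m + k))) (v : SignedPerm m)

theorem extendFixed_fst_of_mem {i : Fin (m + k)} (hi : (i : ℕ) ∈ F) :
    (extendFixed hF v).1 i = i :=
  Equiv.Perm.extendDomain_apply_not_subtype _ _ (not_not_intro hi)

theorem extendFixed_snd_of_mem {i : Fin (m + k)} (hi : (i : ℕ) ∈ F) :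
    (extendFixed hF v).2 i = false :=
  dif_neg (not_not_intro hi)

theorem extendFixed_fst_complEquiv (j : Fin m) :
    (extendFixed hF v).1 (complEquiv hF j) = complEquiv hF (v.1 j) :=
  Equiv.Perm.extendDomain_apply_image ..

theorem extendFixed_snd_complEquiv (j : Fin m) :
    (extendFixed hF v).2 (complEquiv hF j) = v.2 j := by
  simp only [extendFixed, dif_pos (complEquiv hF j).2, Subtype.coe_eta, Equiv.symm_apply_apply]

theorem extendFixed_injective : Function.Injective (extendFixed hF) := fun v v' h =>
  Prod.ext (Equiv.Perm.extendDomainHom_injective (complEquiv hF) (congrArg Prod.fst h)) <|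
    funext fun j => by
      rw [← extendFixed_snd_complEquiv hF, h, extendFixed_snd_complEquiv]

theorem exists_extendFixed_eq {w : SignedPerm (m + k)}
    (hw : ∀ i ∈ F, sword (m + k) w i = (i : ℤ) + 1) : ∃ v, extendFixed hF v = w := by
  have hfix (i : Fin (m + k)) (hi : (i : ℕ) ∈ F) : w.2 i = false ∧ w.1 i = i := by
    have := hw i hi
    rwa [sword_apply, ← signedLetter_false, signedLetter_inj, Fin.val_inj] at this
  have hmem (i : Fin (m + k)) : (w.1 i : ℕ) ∉ F ↔ (i : ℕ) ∉ F := not_congr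
    ⟨fun h => w.1.injective (hfix _ h).2 ▸ h, fun h => (hfix i h).2.symm ▸ h⟩
  refine ⟨((complEquiv hF).symm.permCongr (w.1.subtypePerm hmem), fun j => w.2 (complEquiv hF j)),
    Prod.ext (Equiv.ext fun i => ?_) (funext fun i => ?_)⟩
  all_goals by_cases hi : (i : ℕ) ∈ F
  · rw [extendFixed_fst_of_mem hF _ hi, (hfix i hi).2]
  · obtain ⟨j, hj⟩ := (complEquiv hF).surjective ⟨i, hi⟩
    obtain rfl : (complEquiv hF j : Fin (m + k)) = i := congrArg Subtype.val hj
    simp [extendFixed_fst_complEquiv]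
  · rw [extendFixed_snd_of_mem hF _ hi, (hfix i hi).1]
  · obtain ⟨j, hj⟩ := (complEquiv hF).surjective ⟨i, hi⟩
    obtain rfl : (complEquiv hF j : Fin (m + k)) = i := congrArg Subtype.val hj
    rw [extendFixed_snd_complEquiv]

theorem negStat_extendFixed :
    negStat (m + k) (sword (m + k) (extendFixed hF v)) = negStat m (sword m v) := by
  rw [negStat_sword, negStat_sword]
  refine (Fintype.sum_of_injective (fun j => (complEquiv hF j : Fin (m + k)))
    (Subtype.val_injective.comp (complEquiv hF).injective) _ _ (fun i hi => ?_) fun j => ?_).symm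
  · have hiF : (i : ℕ) ∈ F := by
      by_contra hiF
      exact hi ⟨(complEquiv hF).symm ⟨i, hiF⟩, by simp⟩
    rw [extendFixed_snd_of_mem hF v hiF, Bool.toNat_false]
  · rw [extendFixed_snd_complEquiv]

theorem sword_extendFixed_of_mem (hi : i ∈ F) :
    sword (m + k) (extendFixed hF v) i = (i : ℤ) + 1 := by
  have hlt := lt_of_mem_of_mem_powersetCard_range hF hi
  rw [sword_apply _ ⟨i, hlt⟩, extendFixed_fst_of_mem hF v hi, extendFixed_snd_of_mem hF v hi,
    signedLetter_false]

theorem sword_extendFixed_complNth (j : Fin m) :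
    sword (m + k) (extendFixed hF v) (complNth F j) =
      signedLetter (v.2 j) (complNth F (v.1 j)) := by
  rw [← coe_complEquiv hF, sword_apply, extendFixed_fst_complEquiv, extendFixed_snd_complEquiv,
    coe_complEquiv]

theorem sword_extendFixed_lt_iff (i j : Fin m) :
    sword (m + k) (extendFixed hF v) (complNth F i) <
        sword (m + k) (extendFixed hF v) (complNth F j) ↔ sword m v i < sword m v j := by
  rw [sword_extendFixed_complNth, sword_extendFixed_complNth, sword_apply, sword_apply,
    signedLetter_lt_signedLetter_iff (complNth_strictMono F)]

theorem sword_extendFixed_lt_self_iff (j : Fin m) :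
    sword (m + k) (extendFixed hF v) (complNth F j) < (complNth F j : ℤ) + 1 ↔
      sword m v j < (j : ℤ) + 1 := by
  rw [sword_extendFixed_complNth, sword_apply, ← signedLetter_false, ← signedLetter_false,
    signedLetter_lt_signedLetter_iff (complNth_strictMono F)]

theorem self_lt_sword_extendFixed_iff (j : Fin m) :
    (complNth F j : ℤ) + 1 < sword (m + k) (extendFixed hF v) (complNth F j) ↔
      (j : ℤ) + 1 < sword m v j := by
  rw [sword_extendFixed_complNth, sword_apply, ← signedLetter_false, ← signedLetter_false,
    signedLetter_lt_signedLetter_iff (complNth_strictMono F)]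

theorem fixedSet_extendFixed_eq_iff :
    fixedSet (m + k) (sword (m + k) (extendFixed hF v)) = F ↔ fixPlus m (sword m v) = 0 := by
  have hfix (j : Fin m) : sword (m + k) (extendFixed hF v) (complNth F j) = (complNth F j : ℤ) + 1 ↔
      sword m v j = (j : ℤ) + 1 := by
    have hlt := sword_extendFixed_lt_self_iff hF v j
    have hgt := self_lt_sword_extendFixed_iff hF v j
    omega
  simp only [← fixedSet_eq_empty_iff, fixedSet, filter_eq_empty_iff, mem_range]
  constructor
  · intro h j hj hjfix
    exact complNth_notMem F j <| h.subset <|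
      mem_filter.2 ⟨mem_range.2 (complNth_lt hF hj), (hfix ⟨j, hj⟩).2 hjfix⟩
  · intro h
    ext i
    rw [mem_filter, mem_range]
    refine ⟨fun ⟨hi, hifix⟩ => ?_, fun hiF =>
      ⟨lt_of_mem_of_mem_powersetCard_range hF hiF, sword_extendFixed_of_mem hF v hiF⟩⟩
    by_contra hiF
    obtain ⟨j, rfl⟩ := exists_complNth_eq hF hi hiF
    exact h j.isLt ((hfix j).1 hifix)

end FixedPoints

section Excedances

variable {F : Finset ℕ} {i k m n : ℕ}

/-- The word obtained from the word `x` in letters at most `n` by replacing its positive fixed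
points by `0`, keeping its excedances and shifting all its other letters below `0`. -/
def excWord (n : ℕ) (x : ℕ → ℤ) (i : ℕ) : ℤ :=
  if (i : ℤ) + 1 < x i then x i else if x i = (i : ℤ) + 1 then 0 else x i - (n + 1)

variable {x : ℕ → ℤ}

theorem excWord_eq_zero (h : x i = (i : ℤ) + 1) : excWord n x i = 0 := by
  rw [excWord, if_neg h.not_gt, if_pos h]

theorem excWord_pos_iff (h : x i ≤ n) : 0 < excWord n x i ↔ (i : ℤ) + 1 < x i := by
  unfold excWord
  split_ifs <;> omega

theorem excWord_neg_iff (h : x i ≤ n) : excWord n x i < 0 ↔ x i < (i : ℤ) + 1 := by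
  unfold excWord
  split_ifs <;> omega

theorem excWord_lt_excWord_iff (h : x i ≤ n) (h' : x (i + 1) ≤ n) (hne : x (i + 1) ≠ x i) :
    excWord n x (i + 1) < excWord n x i ↔ x (i + 1) < x i := by
  unfold excWord
  split_ifs <;> omega

theorem majStat_excWord (w : SignedPerm n) :
    majStat n (excWord n (sword n w)) = majStat n (sword n w) :=
  majStat_congr fun i hi => excWord_lt_excWord_iff (sword_le w _) (sword_le w _)
    (sword_ne w hi (i.lt_succ_self.trans hi) i.succ_ne_self)

theorem excWord_sword_ne_zero {v : SignedPerm m} (hv : fixPlus m (sword m v) = 0) :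
    ∀ i < m, excWord m (sword m v) i ≠ 0 := by
  intro i hi h0
  have hneg := (excWord_neg_iff (sword_le v i)).not.1 h0.not_lt
  have hpos := (excWord_pos_iff (sword_le v i)).not.1 h0.not_gt
  rw [← fixedSet_eq_empty_iff, fixedSet, filter_eq_empty_iff] at hv
  exact hv (mem_range.2 hi) (by omega)

theorem majStat_sword_extendFixed (hF : F ∈ powersetCard k (range (m + k))) (v : SignedPerm m) :
    majStat (m + k) (sword (m + k) (extendFixed hF v)) =
      majStat (m + k) (insertLetter 0 (excWord m (sword m v)) F) := by
  set W := sword (m + k) (extendFixed hF v)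
  have hW : ∀ i, W i ≤ (m + k : ℕ) := sword_le _
  have hzero : ∀ i ∈ F, excWord (m + k) W i = 0 := fun i hi =>
    excWord_eq_zero (sword_extendFixed_of_mem hF v hi)
  rw [← majStat_excWord]
  refine majStat_congr fun i hi => ?_
  by_cases hiF : i ∈ F <;> by_cases hiF' : i + 1 ∈ F
  · rw [hzero i hiF, hzero _ hiF', insertLetter_of_mem hiF, insertLetter_of_mem hiF']
  · rw [hzero i hiF, insertLetter_of_mem hiF]
    obtain ⟨j, hj⟩ := exists_complNth_eq hF hi hiF'
    rw [← hj, insertLetter_complNth, excWord_neg_iff (hW _), excWord_neg_iff (sword_le v j)]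
    exact sword_extendFixed_lt_self_iff hF v j
  · rw [hzero _ hiF', insertLetter_of_mem hiF']
    obtain ⟨j, rfl⟩ := exists_complNth_eq hF (i.lt_succ_self.trans hi) hiF
    rw [insertLetter_complNth, excWord_pos_iff (hW _), excWord_pos_iff (sword_le v j)]
    exact self_lt_sword_extendFixed_iff hF v j
  · obtain ⟨j, hj⟩ := exists_complNth_eq hF (i.lt_succ_self.trans hi) hiF
    obtain ⟨j', hj'⟩ := exists_complNth_eq hF hi hiF'
    have hsucc : (j' : ℕ) = j + 1 := by
      rw [← complCount_complNth F j', hj', complCount_succ_of_notMem hiF, ← hj,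
        complCount_complNth]
    rw [excWord_lt_excWord_iff (hW _) (hW _)
      (sword_ne _ hi (i.lt_succ_self.trans hi) i.succ_ne_self), ← hj', ← hj,
      insertLetter_complNth, insertLetter_complNth, hsucc,
      excWord_lt_excWord_iff (sword_le v _) (sword_le v _)
        (sword_ne v (hsucc ▸ j'.isLt) j.isLt (Nat.succ_ne_self _)), ← hsucc]
    exact sword_extendFixed_lt_iff hF v j' j

end Excedances

section Derangements

variable {R : Type*} [CommSemiring R]

/-- The generating polynomial of the signed derangements of order `n` by `(maj, neg)`. -/
def derangementSum (p y : R) (n : ℕ) : R :=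
  ∑ w : SignedPerm n with fixPlus n (sword n w) = 0, majNegWeight p y w

theorem sum_majNegWeight_fixedSet_eq {F : Finset ℕ} {m k : ℕ} (p y : R)
    (hF : F ∈ powersetCard k (range (m + k))) :
    ∑ w : SignedPerm (m + k) with fixedSet (m + k) (sword (m + k) w) = F, majNegWeight p y w =
      ∑ v : SignedPerm m with fixPlus m (sword m v) = 0,
        p ^ majStat (m + k) (insertLetter 0 (excWord m (sword m v)) F) *
          y ^ negStat m (sword m v) := by
  symm
  refine sum_bij (fun v _ => extendFixed hF v) (fun v hv => ?_)
    (fun v _ v' _ h => extendFixed_injective hF h) (fun w hw => ?_) fun v _ => ?_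
  · simpa only [mem_filter_univ, fixedSet_extendFixed_eq_iff] using hv
  · rw [mem_filter_univ] at hw
    obtain ⟨v, rfl⟩ := exists_extendFixed_eq hF fun i hi => (mem_filter.1 (hw.superset hi)).2
    exact ⟨v, (mem_filter_univ _).2 ((fixedSet_extendFixed_eq_iff hF v).1 hw), rfl⟩
  · rw [majNegWeight, majStat_sword_extendFixed, negStat_extendFixed]

theorem sum_powersetCard_majNegWeight (p y : R) (m k : ℕ) :
    ∑ F ∈ powersetCard k (range (m + k)),
        ∑ w : SignedPerm (m + k) with fixedSet (m + k) (sword (m + k) w) = F, majNegWeight p y w =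
      qBinom p (m + k) k * derangementSum p y m := by
  rw [sum_congr rfl fun F hF => sum_majNegWeight_fixedSet_eq p y hF, sum_comm, derangementSum,
    mul_sum]
  refine sum_congr rfl fun v hv => ?_
  rw [← sum_mul, sum_pow_majStat_insertLetter p (excWord_sword_ne_zero (mem_filter.1 hv).2),
    majStat_excWord, majNegWeight]
  ring

theorem sum_majNegWeight_eq_sum_derangementSum (p y : R) (n : ℕ) :
    ∑ w : SignedPerm n, majNegWeight p y w =
      ∑ k ∈ range (n + 1), qBinom p n k * derangementSum p y (n - k) := by
  have hmem : ∀ w ∈ (univ : Finset (SignedPerm n)),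
      fixedSet n (sword n w) ∈ (range n).powerset := fun w _ => mem_powerset.2 (filter_subset _ _)
  rw [← sum_fiberwise_of_maps_to hmem, sum_powerset, card_range]
  refine sum_congr rfl fun k hk => ?_
  obtain ⟨m, rfl⟩ := Nat.exists_eq_add_of_le' (Nat.lt_succ_iff.1 (mem_range.1 hk))
  rw [Nat.add_sub_cancel, ← sum_powersetCard_majNegWeight]

end Derangements

section DerangementFormula

variable {R : Type*} [CommRing R]

theorem DB_eq_derangementSum (q Z : R) (n : ℕ) :
    DB q Z n = derangementSum (q ^ 2) (q * Z) n :=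
  sum_congr rfl fun w _ => by
    rw [fmajStat, majNegWeight, pow_add, pow_mul, mul_pow, mul_assoc]

theorem derangementSum_eq (p y : R) (n : ℕ) :
    derangementSum p y n = ∑ k ∈ range (n + 1),
      (-1) ^ k * p ^ k.choose 2 * qBinom p n k * ((1 + y) ^ (n - k) * qFactorial p (n - k)) :=
  qBinom_inversion p (fun n => (sum_majNegWeight p y n).symm.trans
    (sum_majNegWeight_eq_sum_derangementSum p y n)) n

theorem stmt13_general (q Z : R) (n : ℕ) :
    DB q Z n = ∑ k ∈ range (n + 1),
      qBinom (q ^ 2) n k * (-1) ^ k * q ^ (k * (k - 1)) * qFactorial (q ^ 2) (n - k) *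
        (1 + q * Z) ^ (n - k) := by
  rw [DB_eq_derangementSum, derangementSum_eq]
  refine sum_congr rfl fun k _ => ?_
  rw [← pow_mul, Nat.choose_two_right, Nat.mul_div_cancel' (Nat.even_mul_pred_self k).two_dvd]
  ring

end DerangementFormula

theorem stmt13 (K : Type*) [Field K] (q Z : K) (n : ℕ)
    (h1 : (1 : K) - q ^ 2 ≠ 0) (h2 : ∀ m ≤ n, qq (q ^ 2) m ≠ 0) :
    DB q Z n
      = ∑ k ∈ Finset.range (n + 1),
          (qq (q ^ 2) n / (qq (q ^ 2) k * qq (q ^ 2) (n - k)))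
            * (-1) ^ k * q ^ (k * (k - 1))
            * (qq (q ^ 2) (n - k) / (1 - q ^ 2) ^ (n - k)) * (1 + q * Z) ^ (n - k) := by
  exact (stmt13_general q Z n).trans <| sum_congr rfl fun k hk => by
    rw [qBinom_eq_qq_div (mem_range_succ_iff.1 hk) h2, qFactorial_eq_qq_div h1]
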